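/- Under the stated setup and assumptions, for every p ∈ [1,∞] the low-rank approximation error satisfies ‖(I − QQ*)A‖_p ≤ ‖Σ_⊥‖_p + γ_k^{2q}·‖Σ_⊥Ω_2Ω_1†‖_p in the Schatten-p norm. -/

import Mathlib

open scoped ENNReal
open Matrix

/-- The `j`-th largest singular value (0-indexed) of a complex matrix,
obtained as the decreasingly sorted square roots of the eigenvalues of `Mᴴ * M`. -/
noncomputable def sval {m n : ℕ} (M : Matrix (Fin m) (Fin n) ℂ) (j : ℕ) : ℝ :=
  (List.insertionSort (· ≥ ·)
    ((List.ofFn (Matrix.isHermitian_conjTranspose_mul_self M).eigenvalues).map Real.sqrt)).getD j 0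

/-- The Schatten-`p` norm (`p = ∞` gives the spectral norm). -/
noncomputable def schatten {m n : ℕ} (p : ℝ≥0∞) (M : Matrix (Fin m) (Fin n) ℂ) : ℝ :=
  if p = ⊤ then sval M 0
  else (∑ j ∈ Finset.range n, sval M j ^ p.toReal) ^ (1 / p.toReal)

/-- Moore–Penrose pseudoinverse of a full-row-rank matrix. -/
noncomputable def rpinv {a b : ℕ} (M : Matrix (Fin a) (Fin b) ℂ) : Matrix (Fin b) (Fin a) ℂ :=
  Mᴴ * (M * Mᴴ)⁻¹

/-- Rectangular diagonal matrix with entries `σ (off), σ (off+1), …` on the diagonal. -/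
noncomputable def diagRect (σ : ℕ → ℝ) (off a b : ℕ) : Matrix (Fin a) (Fin b) ℂ :=
  Matrix.of fun i j => if (i : ℕ) = (j : ℕ) then (σ (off + (i : ℕ)) : ℂ) else 0

/-- The first `b` columns of a matrix with `b + c` columns. -/
def colsL {a b c : ℕ} (M : Matrix (Fin a) (Fin (b + c)) ℂ) : Matrix (Fin a) (Fin b) ℂ :=
  M.submatrix id (Fin.castAdd c)

/-- The last `c` columns of a matrix with `b + c` columns. -/
def colsR {a b c : ℕ} (M : Matrix (Fin a) (Fin (b + c)) ℂ) : Matrix (Fin a) (Fin c) ℂ :=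
  M.submatrix id (Fin.natAdd b)

section SchattenNorm

open scoped Matrix.Norms.L2Operator ComplexOrder

/-- The singular values of `M`, in the order of the eigenvalues of `Mᴴ * M`. -/
noncomputable def singularFun {m n : ℕ} (M : Matrix (Fin m) (Fin n) ℂ) (i : Fin n) : ℝ :=
  √((isHermitian_conjTranspose_mul_self M).eigenvalues i)

lemma singularFun_nonneg {m n : ℕ} (M : Matrix (Fin m) (Fin n) ℂ) (i : Fin n) :
    0 ≤ singularFun M i :=
  Real.sqrt_nonneg _

lemma sval_eq_getD {m n : ℕ} (M : Matrix (Fin m) (Fin n) ℂ) (j : ℕ) :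
    sval M j = ((List.ofFn (singularFun M)).insertionSort (· ≥ ·)).getD j 0 := by
  rw [sval, List.map_ofFn]
  rfl

lemma sum_sval_eq {m n : ℕ} (M : Matrix (Fin m) (Fin n) ℂ) (f : ℝ → ℝ) :
    ∑ j ∈ Finset.range n, f (sval M j) = ∑ i, f (singularFun M i) := by
  simp only [sval_eq_getD]
  set l := (List.ofFn (singularFun M)).insertionSort (· ≥ ·) with hl
  have hlen : l.length = n := by simp [hl]
  have hperm : l.Perm (List.ofFn (singularFun M)) := List.perm_insertionSort _ _
  have h₁ : ∑ i, f (singularFun M i) = (l.map f).sum := by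
    rw [(hperm.map f).sum_eq, List.map_ofFn, List.sum_ofFn]
    rfl
  have h₂ : List.ofFn (fun i : Fin l.length => f (l.getD i 0)) = l.map f := by
    simp [List.ofFn_getElem_eq_map]
  rw [h₁, ← h₂, List.sum_ofFn, ← hlen, Finset.sum_range]

lemma isGreatest_sval_zero {m n : ℕ} (M : Matrix (Fin m) (Fin (n + 1)) ℂ) :
    IsGreatest (Set.range (singularFun M)) (sval M 0) := by
  rw [sval_eq_getD]
  set l := (List.ofFn (singularFun M)).insertionSort (· ≥ ·) with hl
  have hmem (x : ℝ) : x ∈ l ↔ x ∈ Set.range (singularFun M) := by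
    rw [hl, List.mem_insertionSort, List.mem_ofFn]
    rfl
  have hsort : l.Pairwise (· ≥ ·) := List.pairwise_insertionSort _ _
  have hlen : l.length = n + 1 := by rw [hl, List.length_insertionSort, List.length_ofFn]
  clear_value l
  match l, hlen with
  | a :: t, _ =>
    refine ⟨(hmem a).1 (by simp), fun x hx => ?_⟩
    rcases List.mem_cons.1 ((hmem x).2 hx) with rfl | h
    · simp
    · exact (List.pairwise_cons.1 hsort).1 x h

lemma schatten_eq_norm_toLp {m n : ℕ} (p : ℝ≥0∞) [hp : Fact (1 ≤ p)]
    (M : Matrix (Fin m) (Fin n) ℂ) :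
    schatten p M = ‖WithLp.toLp p (singularFun M)‖ := by
  rw [schatten]
  split_ifs with h
  · subst h
    rw [PiLp.norm_eq_ciSup]
    simp only [Real.norm_eq_abs, abs_of_nonneg (singularFun_nonneg M _)]
    match n, M with
    | 0, M => simp [sval_eq_getD]
    | n + 1, M => exact (isGreatest_sval_zero M).csSup_eq.symm
  · have hpos : 0 < p.toReal := ENNReal.toReal_pos (zero_lt_one.trans_le hp.out).ne' h
    rw [PiLp.norm_eq_sum hpos, sum_sval_eq M (· ^ p.toReal)]
    simp [abs_of_nonneg (singularFun_nonneg M _)]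

/-- Monotonicity of the `ℓ^p` norm combined with a Schur test with constant `c`. -/
lemma norm_toLp_le_of_schur {ι κ E : Type*} [Fintype ι] [Fintype κ]
    [SeminormedAddCommGroup E] (p : ℝ≥0∞) [hp : Fact (1 ≤ p)]
    (w : ι → E) (s : κ → ℝ) (d : ι → κ → ℝ) {c : ℝ} (hc : 0 ≤ c)
    (hs : ∀ j, 0 ≤ s j) (hd : ∀ i j, 0 ≤ d i j)
    (hrow : ∀ i, ∑ j, d i j ≤ c) (hcol : ∀ j, ∑ i, d i j ≤ c)
    (hw : ∀ i, ‖w i‖ ≤ ∑ j, d i j * s j) :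
    ‖WithLp.toLp p w‖ ≤ c * ‖WithLp.toLp p s‖ := by
  by_cases h : p = ⊤
  · subst h
    rw [PiLp.norm_toLp, PiLp.norm_toLp, pi_norm_le_iff_of_nonneg (by positivity)]
    intro i
    calc ‖w i‖ ≤ ∑ j, d i j * s j := hw i
      _ ≤ ∑ j, d i j * ‖s‖ := by
        gcongr with j
        · exact hd i j
        · exact (Real.le_norm_self _).trans (norm_le_pi_norm s j)
      _ ≤ c * ‖s‖ := by
        rw [← Finset.sum_mul]
        gcongr
        exact hrow i
  have hp1 : 1 ≤ p.toReal := by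
    simpa using (ENNReal.toReal_le_toReal ENNReal.one_ne_top h).2 hp.out
  set r := p.toReal
  have hr : 0 < r := by linarith
  rw [PiLp.norm_eq_sum hr, PiLp.norm_eq_sum hr, one_div]
  simp only [Real.norm_eq_abs, abs_of_nonneg (hs _)]
  have hS : 0 ≤ ∑ j, s j ^ r := Finset.sum_nonneg fun j _ => Real.rpow_nonneg (hs j) _
  have hds (i : ι) : 0 ≤ ∑ j, d i j * s j ^ r :=
    Finset.sum_nonneg fun j _ => mul_nonneg (hd i j) (Real.rpow_nonneg (hs j) _)
  have key (i : ι) : ‖w i‖ ^ r ≤ c ^ (r - 1) * ∑ j, d i j * s j ^ r := by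
    have h1 : ‖w i‖ ≤ c ^ (1 - r⁻¹) * (∑ j, d i j * s j ^ r) ^ r⁻¹ := by
      refine (hw i).trans ((Real.inner_le_weight_mul_Lp_of_nonneg _ hp1 _ _ (hd i) hs).trans ?_)
      gcongr
      · exact Real.rpow_nonneg (hds i) _
      · exact Finset.sum_nonneg fun j _ => hd i j
      · exact sub_nonneg.2 (inv_le_one_of_one_le₀ hp1)
      · exact hrow i
    calc ‖w i‖ ^ r ≤ (c ^ (1 - r⁻¹) * (∑ j, d i j * s j ^ r) ^ r⁻¹) ^ r := by gcongr
      _ = c ^ (r - 1) * ∑ j, d i j * s j ^ r := by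
        rw [Real.mul_rpow (by positivity) (Real.rpow_nonneg (hds i) _), ← Real.rpow_mul hc,
          Real.rpow_inv_rpow (hds i) hr.ne', sub_mul, inv_mul_cancel₀ hr.ne', one_mul]
  have total : ∑ i, ‖w i‖ ^ r ≤ c ^ r * ∑ j, s j ^ r := by
    calc ∑ i, ‖w i‖ ^ r ≤ ∑ i, c ^ (r - 1) * ∑ j, d i j * s j ^ r :=
          Finset.sum_le_sum fun i _ => key i
      _ = c ^ (r - 1) * ∑ j, (∑ i, d i j) * s j ^ r := by
        rw [← Finset.mul_sum, Finset.sum_comm]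
        simp only [Finset.sum_mul]
      _ ≤ c ^ (r - 1) * ∑ j, c * s j ^ r := by
        gcongr with j
        · exact Real.rpow_nonneg (hs j) _
        · exact hcol j
      _ = c ^ r * ∑ j, s j ^ r := by
        rw [← Finset.mul_sum, ← mul_assoc]
        congr 1
        nth_rewrite 2 [← Real.rpow_one c]
        rw [← Real.rpow_add_of_nonneg hc (by linarith) zero_le_one, sub_add_cancel]
  calc (∑ i, ‖w i‖ ^ r) ^ r⁻¹ ≤ (c ^ r * ∑ j, s j ^ r) ^ r⁻¹ := by gcongr
    _ = c * (∑ j, s j ^ r) ^ r⁻¹ := by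
      rw [Real.mul_rpow (by positivity) hS, Real.rpow_rpow_inv hc hr.ne']

lemma norm_le_one_of_conjTranspose_mul_self {a b : ℕ} {X : Matrix (Fin a) (Fin b) ℂ}
    (h : ‖Xᴴ * X‖ ≤ 1) : ‖X‖ ≤ 1 := by
  rw [l2_opNorm_conjTranspose_mul_self] at h
  nlinarith [norm_nonneg X]

lemma norm_one_le_one {a : ℕ} : ‖(1 : Matrix (Fin a) (Fin a) ℂ)‖ ≤ 1 := by
  rw [← diagonal_one, l2_opNorm_diagonal]
  exact (pi_norm_le_iff_of_nonneg zero_le_one).2 fun i => by simp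

lemma norm_le_one_of_isometry {a b : ℕ} {X : Matrix (Fin a) (Fin b) ℂ}
    (h : Xᴴ * X = 1) : ‖X‖ ≤ 1 :=
  norm_le_one_of_conjTranspose_mul_self (h ▸ norm_one_le_one)

/-- A singular value decomposition in terms of contractions. -/
lemma exists_contractions_singularFun {m n : ℕ} (M : Matrix (Fin m) (Fin n) ℂ) :
    ∃ (X : Matrix (Fin m) (Fin n) ℂ) (Y : Matrix (Fin n) (Fin n) ℂ), ‖X‖ ≤ 1 ∧ ‖Y‖ ≤ 1 ∧
      M = X * diagonal (fun i => (singularFun M i : ℂ)) * Yᴴ ∧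
      Xᴴ * M * Y = diagonal (fun i => (singularFun M i : ℂ)) := by
  have hM := isHermitian_conjTranspose_mul_self M
  set s := singularFun M with hs
  obtain ⟨Y, hY, hY', hd⟩ : ∃ Y : Matrix (Fin n) (Fin n) ℂ, Yᴴ * Y = 1 ∧ Y * Yᴴ = 1 ∧
      (M * Y)ᴴ * (M * Y) = diagonal (fun i => (s i : ℂ) * s i) := by
    refine ⟨hM.eigenvectorUnitary, Unitary.coe_star_mul_self _, Unitary.coe_mul_star_self _, ?_⟩
    have h := hM.conjStarAlgAut_star_eigenvectorUnitary
    rw [Unitary.conjStarAlgAut_star_apply] at h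
    rw [conjTranspose_mul, Matrix.mul_assoc, ← Matrix.mul_assoc Mᴴ, ← Matrix.mul_assoc]
    refine h.trans (congrArg diagonal (funext fun i => ?_))
    rw [← Complex.ofReal_mul, hs, singularFun,
      Real.mul_self_sqrt (eigenvalues_conjTranspose_mul_self_nonneg M i)]
    rfl
  have hproj : M * Y * diagonal (fun i => (s i : ℂ)⁻¹ * s i) = M * Y := by
    have h0 : M * Y * (diagonal (fun i => (s i : ℂ)⁻¹ * s i) - 1) = 0 := by
      rw [← conjTranspose_mul_self_eq_zero, conjTranspose_mul, Matrix.mul_assoc,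
        ← Matrix.mul_assoc (M * Y)ᴴ, hd, ← diagonal_one, diagonal_sub, diagonal_mul_diagonal,
        diagonal_conjTranspose, diagonal_mul_diagonal, ← diagonal_zero]
      congr 1
      funext i
      by_cases h : (s i : ℂ) = 0 <;> simp [h]
    rwa [Matrix.mul_sub, Matrix.mul_one, sub_eq_zero] at h0
  have hinv : (diagonal (fun i => (s i : ℂ)⁻¹))ᴴ = diagonal (fun i => (s i : ℂ)⁻¹) := by
    rw [diagonal_conjTranspose]
    congr 1
    funext i
    simp
  refine ⟨M * Y * diagonal (fun i => (s i : ℂ)⁻¹), Y, ?_, norm_le_one_of_isometry hY, ?_, ?_⟩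
  · apply norm_le_one_of_conjTranspose_mul_self
    rw [conjTranspose_mul, Matrix.mul_assoc, ← Matrix.mul_assoc (M * Y)ᴴ, hd, hinv,
      diagonal_mul_diagonal, diagonal_mul_diagonal, l2_opNorm_diagonal]
    refine (pi_norm_le_iff_of_nonneg zero_le_one).2 fun i => ?_
    by_cases h : (s i : ℂ) = 0 <;> simp [h]
  · rw [Matrix.mul_assoc (M * Y), diagonal_mul_diagonal, hproj, Matrix.mul_assoc, hY',
      Matrix.mul_one]
  · rw [conjTranspose_mul, hinv, Matrix.mul_assoc, Matrix.mul_assoc, hd, diagonal_mul_diagonal]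
    congr 1
    funext i
    by_cases h : (s i : ℂ) = 0 <;> simp [h]

lemma sum_norm_sq_col_le {a b : ℕ} (X : Matrix (Fin a) (Fin b) ℂ) (j : Fin b) :
    ∑ i, ‖X i j‖ ^ 2 ≤ ‖X‖ ^ 2 := by
  have h := l2_opNorm_mulVec X (EuclideanSpace.single j 1)
  rw [PiLp.norm_single, norm_one, mul_one] at h
  have h' := pow_le_pow_left₀ (norm_nonneg _) h 2
  rw [EuclideanSpace.norm_sq_eq] at h'
  simpa using h'

lemma sum_norm_sq_row_le {a b : ℕ} (X : Matrix (Fin a) (Fin b) ℂ) (i : Fin a) :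
    ∑ j, ‖X i j‖ ^ 2 ≤ ‖X‖ ^ 2 := by
  simpa [l2_opNorm_conjTranspose] using sum_norm_sq_col_le Xᴴ i

lemma sum_mul_le_of_sum_sq_le {ι : Type*} [Fintype ι] (f g : ι → ℝ) {a b : ℝ}
    (ha : 0 ≤ a) (hb : 0 ≤ b) (hf : ∑ i, f i ^ 2 ≤ a ^ 2) (hg : ∑ i, g i ^ 2 ≤ b ^ 2) :
    ∑ i, f i * g i ≤ a * b := by
  refine (Real.sum_mul_le_sqrt_mul_sqrt _ f g).trans ?_
  gcongr
  · exact Real.sqrt_le_iff.2 ⟨ha, hf⟩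
  · exact Real.sqrt_le_iff.2 ⟨hb, hg⟩

/-- The diagonal of a two-sided multiple of `M` is controlled by the Schatten norm of `M`. -/
lemma norm_toLp_diag_le {m n r : ℕ} (p : ℝ≥0∞) [Fact (1 ≤ p)]
    (C : Matrix (Fin r) (Fin m) ℂ) (M : Matrix (Fin m) (Fin n) ℂ)
    (D : Matrix (Fin n) (Fin r) ℂ) :
    ‖WithLp.toLp p (C * M * D).diag‖ ≤ ‖C‖ * ‖D‖ * schatten p M := by
  obtain ⟨X, Y, hX, hY, hM, -⟩ := exists_contractions_singularFun M
  set s := singularFun M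
  have hCX : ‖C * X‖ ≤ ‖C‖ :=
    (l2_opNorm_mul _ _).trans (mul_le_of_le_one_right (norm_nonneg _) hX)
  have hYD : ‖Yᴴ * D‖ ≤ ‖D‖ := by
    refine (l2_opNorm_mul _ _).trans (mul_le_of_le_one_left (norm_nonneg _) ?_)
    rwa [l2_opNorm_conjTranspose]
  have hCMD : C * M * D = C * X * diagonal (fun i => (s i : ℂ)) * (Yᴴ * D) := by
    conv_lhs => rw [hM]
    simp only [Matrix.mul_assoc]
  rw [hCMD, schatten_eq_norm_toLp]
  generalize C * X = E at hCX
  generalize Yᴴ * D = F at hYD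
  have hE2 : ‖E‖ ^ 2 ≤ ‖C‖ ^ 2 := by gcongr
  have hF2 : ‖F‖ ^ 2 ≤ ‖D‖ ^ 2 := by gcongr
  refine norm_toLp_le_of_schur p _ s (fun i j => ‖E i j‖ * ‖F j i‖) (by positivity)
    (singularFun_nonneg M) (fun i j => by positivity) (fun i => ?_) (fun j => ?_) (fun i => ?_)
  · exact sum_mul_le_of_sum_sq_le _ _ (norm_nonneg _) (norm_nonneg _)
      ((sum_norm_sq_row_le E i).trans hE2) ((sum_norm_sq_col_le F i).trans hF2)
  · exact sum_mul_le_of_sum_sq_le _ _ (norm_nonneg _) (norm_nonneg _)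
      ((sum_norm_sq_col_le E j).trans hE2) ((sum_norm_sq_row_le F j).trans hF2)
  · rw [diag_apply, Matrix.mul_apply]
    refine (norm_sum_le _ _).trans (Finset.sum_le_sum fun j _ => ?_)
    rw [mul_diagonal, norm_mul, norm_mul, Complex.norm_real, Real.norm_eq_abs,
      abs_of_nonneg (singularFun_nonneg M j)]
    exact (mul_right_comm _ _ _).le

/-- The Schatten norm is attained on the diagonal of a two-sided contraction of `M`. -/
lemma exists_contractions_schatten {m n : ℕ} (p : ℝ≥0∞) [Fact (1 ≤ p)]
    (M : Matrix (Fin m) (Fin n) ℂ) :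
    ∃ (C : Matrix (Fin n) (Fin m) ℂ) (D : Matrix (Fin n) (Fin n) ℂ), ‖C‖ ≤ 1 ∧ ‖D‖ ≤ 1 ∧
      schatten p M = ‖WithLp.toLp p (C * M * D).diag‖ := by
  obtain ⟨X, Y, hX, hY, -, hd⟩ := exists_contractions_singularFun M
  refine ⟨Xᴴ, Y, by rwa [l2_opNorm_conjTranspose], hY, ?_⟩
  rw [hd, diag_diagonal, schatten_eq_norm_toLp]
  by_cases h : p = ⊤
  · subst h
    simp [PiLp.norm_eq_ciSup]
  · have hpos : 0 < p.toReal :=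
      ENNReal.toReal_pos (zero_lt_one.trans_le (Fact.out : 1 ≤ p)).ne' h
    simp [PiLp.norm_eq_sum hpos]

lemma schatten_nonneg {m n : ℕ} (p : ℝ≥0∞) [Fact (1 ≤ p)] (M : Matrix (Fin m) (Fin n) ℂ) :
    0 ≤ schatten p M := by
  rw [schatten_eq_norm_toLp]
  exact norm_nonneg _

lemma schatten_add_le {m n : ℕ} (p : ℝ≥0∞) [Fact (1 ≤ p)] (M N : Matrix (Fin m) (Fin n) ℂ) :
    schatten p (M + N) ≤ schatten p M + schatten p N := by
  obtain ⟨C, D, hC, hD, h⟩ := exists_contractions_schatten p (M + N)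
  have hCD : ‖C‖ * ‖D‖ ≤ 1 := mul_le_one₀ hC (norm_nonneg _) hD
  rw [h, Matrix.mul_add, Matrix.add_mul, diag_add, WithLp.toLp_add]
  exact (norm_add_le _ _).trans (add_le_add
    ((norm_toLp_diag_le p C M D).trans (mul_le_of_le_one_left (schatten_nonneg p M) hCD))
    ((norm_toLp_diag_le p C N D).trans (mul_le_of_le_one_left (schatten_nonneg p N) hCD)))

lemma schatten_mul_mul_le {a b m n : ℕ} (p : ℝ≥0∞) [Fact (1 ≤ p)]
    (X : Matrix (Fin a) (Fin m) ℂ) (M : Matrix (Fin m) (Fin n) ℂ)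
    (Z : Matrix (Fin n) (Fin b) ℂ) :
    schatten p (X * M * Z) ≤ ‖X‖ * ‖Z‖ * schatten p M := by
  obtain ⟨C, D, hC, hD, h⟩ := exists_contractions_schatten p (X * M * Z)
  have hCX : ‖C * X‖ ≤ ‖X‖ :=
    (l2_opNorm_mul _ _).trans (mul_le_of_le_one_left (norm_nonneg _) hC)
  have hZD : ‖Z * D‖ ≤ ‖Z‖ :=
    (l2_opNorm_mul _ _).trans (mul_le_of_le_one_right (norm_nonneg _) hD)
  have hassoc : C * (X * M * Z) * D = C * X * M * (Z * D) := by simp only [Matrix.mul_assoc]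
  rw [h, hassoc]
  refine (norm_toLp_diag_le p _ M _).trans ?_
  have := schatten_nonneg p M
  gcongr

lemma norm_one_sub_mul_conjTranspose_le {a b : ℕ} {Q : Matrix (Fin a) (Fin b) ℂ}
    (hQ : Qᴴ * Q = 1) : ‖1 - Q * Qᴴ‖ ≤ 1 := by
  have hidem : (1 - Q * Qᴴ)ᴴ * (1 - Q * Qᴴ) = 1 - Q * Qᴴ := by
    have h : Q * Qᴴ * (Q * Qᴴ) = Q * Qᴴ := by
      rw [Matrix.mul_assoc, ← Matrix.mul_assoc Qᴴ, hQ, Matrix.one_mul]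
    simp [Matrix.sub_mul, Matrix.mul_sub, h]
  have h := l2_opNorm_conjTranspose_mul_self (1 - Q * Qᴴ)
  rw [hidem] at h
  nlinarith [norm_nonneg (1 - Q * Qᴴ)]

lemma norm_diagRect_mul_conjTranspose_pow_le {σ : ℕ → ℝ} (hσ0 : ∀ i, 0 ≤ σ i)
    (hσm : ∀ i j, i ≤ j → σ j ≤ σ i) (k a b q : ℕ) :
    ‖(diagRect σ k a b * (diagRect σ k a b)ᴴ) ^ q‖ ≤ σ k ^ (2 * q) := by
  have hdiag : diagRect σ k a b * (diagRect σ k a b)ᴴ =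
      diagonal fun i : Fin a => if (i : ℕ) < b then (σ (k + i) : ℂ) ^ 2 else 0 := by
    ext i j
    rw [Matrix.mul_apply]
    simp only [diagRect, conjTranspose_apply, of_apply, diagonal_apply]
    by_cases hib : (i : ℕ) < b
    · rw [Finset.sum_eq_single ⟨i, hib⟩]
      · by_cases hij : i = j
        · subst hij
          simp [hib, sq]
        · simp [hij, Ne.symm (Fin.ext_iff.not.1 hij)]
      · intro l _ hl
        have : (i : ℕ) ≠ l := fun h => hl (Fin.ext h.symm)
        simp [this]
      · simp
    · rw [Finset.sum_eq_zero]
      · simp [hib]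
      · intro l _
        have : (i : ℕ) ≠ l := fun h => hib (h ▸ l.2)
        simp [this]
  rw [hdiag, diagonal_pow, l2_opNorm_diagonal,
    pi_norm_le_iff_of_nonneg (pow_nonneg (hσ0 k) _)]
  intro i
  rw [Pi.pow_apply, norm_pow, pow_mul]
  gcongr
  split_ifs
  · rw [norm_pow, Complex.norm_real, Real.norm_eq_abs, abs_of_nonneg (hσ0 _)]
    exact pow_le_pow_left₀ (hσ0 _) (hσm _ _ (Nat.le_add_right _ _)) 2
  · simpa using sq_nonneg (σ k)

lemma mul_conjTranspose_eq_colsL_add_colsR {a b c : ℕ} (X : Matrix (Fin a) (Fin (b + c)) ℂ) {d : ℕ}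
    (Y : Matrix (Fin d) (Fin (b + c)) ℂ) :
    X * Yᴴ = colsL X * (colsL Y)ᴴ + colsR X * (colsR Y)ᴴ := by
  ext i j
  simp [Matrix.mul_apply, Fin.sum_univ_add, colsL, colsR]

lemma mul_diagRect_mul_conjTranspose {k m₂ n₂ a b : ℕ} (σ : ℕ → ℝ)
    (U : Matrix (Fin a) (Fin (k + m₂)) ℂ) (V : Matrix (Fin b) (Fin (k + n₂)) ℂ) :
    U * diagRect σ 0 (k + m₂) (k + n₂) * Vᴴ =
      colsL U * diagonal (fun i : Fin k => (σ i : ℂ)) * (colsL V)ᴴ +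
        colsR U * diagRect σ k m₂ n₂ * (colsR V)ᴴ := by
  have hL : colsL (U * diagRect σ 0 (k + m₂) (k + n₂)) =
      colsL U * diagonal (fun i : Fin k => (σ i : ℂ)) := by
    ext i j
    have hne (x : Fin m₂) : k + (x : ℕ) ≠ j := by have := j.2; omega
    rw [mul_diagonal]
    simp [colsL, Matrix.mul_apply, Fin.sum_univ_add, diagRect, hne, ← Fin.ext_iff]
  have hR : colsR (U * diagRect σ 0 (k + m₂) (k + n₂)) = colsR U * diagRect σ k m₂ n₂ := by
    ext i j
    have hne (x : Fin k) : (x : ℕ) ≠ k + j := by have := x.2; omega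
    simp [colsR, Matrix.mul_apply, Fin.sum_univ_add, diagRect, hne]
  rw [mul_conjTranspose_eq_colsL_add_colsR, hL, hR]

lemma colsL_conjTranspose_mul_colsL {a b c : ℕ} {U : Matrix (Fin a) (Fin (b + c)) ℂ}
    (hU : Uᴴ * U = 1) : (colsL U)ᴴ * colsL U = 1 := by
  ext i j
  have h := congrFun (congrFun hU (Fin.castAdd c i)) (Fin.castAdd c j)
  simpa [Matrix.mul_apply, colsL, Matrix.one_apply] using h

lemma colsR_conjTranspose_mul_colsR {a b c : ℕ} {U : Matrix (Fin a) (Fin (b + c)) ℂ}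
    (hU : Uᴴ * U = 1) : (colsR U)ᴴ * colsR U = 1 := by
  ext i j
  have h := congrFun (congrFun hU (Fin.natAdd b i)) (Fin.natAdd b j)
  simpa [Matrix.mul_apply, colsR, Matrix.one_apply] using h

lemma colsL_conjTranspose_mul_colsR {a b c : ℕ} {U : Matrix (Fin a) (Fin (b + c)) ℂ}
    (hU : Uᴴ * U = 1) : (colsL U)ᴴ * colsR U = 0 := by
  ext i j
  have h := congrFun (congrFun hU (Fin.castAdd c i)) (Fin.natAdd b j)
  have hne : Fin.castAdd c i ≠ Fin.natAdd b j := by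
    intro h
    have := congrArg Fin.val h
    simp at this
    omega
  simpa [Matrix.mul_apply, colsL, colsR, Matrix.one_apply, hne] using h

lemma colsR_conjTranspose_mul_colsL {a b c : ℕ} {U : Matrix (Fin a) (Fin (b + c)) ℂ}
    (hU : Uᴴ * U = 1) : (colsR U)ᴴ * colsL U = 0 := by
  simpa using congrArg conjTranspose (colsL_conjTranspose_mul_colsR hU)

/-- A full-row-rank matrix has `rpinv` as a right inverse. -/
lemma mul_rpinv_of_rank_eq {a b : ℕ} {M : Matrix (Fin a) (Fin b) ℂ} (h : M.rank = a) :
    M * rpinv M = 1 := by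
  have hrank : (M * Mᴴ).rank = a := by rw [rank_self_mul_conjTranspose, h]
  have hunit : IsUnit (M * Mᴴ) := by
    rw [← mulVec_surjective_iff_isUnit]
    have htop : LinearMap.range (M * Mᴴ).mulVecLin = ⊤ := by
      apply Submodule.eq_top_of_finrank_eq
      rw [← Matrix.rank, hrank, Module.finrank_fin_fun]
    exact LinearMap.range_eq_top.1 htop
  rw [rpinv, ← Matrix.mul_assoc, mul_nonsing_inv _ ((isUnit_iff_isUnit_det _).1 hunit)]

/-- Powers of `A * Aᴴ` respect an orthogonal two-term splitting of `A`. -/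
lemma mul_conjTranspose_pow_mul {k m₂ n₂ m n : ℕ}
    {A : Matrix (Fin m) (Fin n) ℂ}
    {U₁ : Matrix (Fin m) (Fin k) ℂ} {U₂ : Matrix (Fin m) (Fin m₂) ℂ}
    {V₁ : Matrix (Fin n) (Fin k) ℂ} {V₂ : Matrix (Fin n) (Fin n₂) ℂ}
    {L : Matrix (Fin k) (Fin k) ℂ} {S : Matrix (Fin m₂) (Fin n₂) ℂ}
    (hA : A = U₁ * L * V₁ᴴ + U₂ * S * V₂ᴴ)
    (hU₁ : U₁ᴴ * U₁ = 1) (hU₂ : U₂ᴴ * U₂ = 1) (hU₁₂ : U₁ᴴ * U₂ = 0) (hU₂₁ : U₂ᴴ * U₁ = 0)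
    (hV₁ : V₁ᴴ * V₁ = 1) (hV₂ : V₂ᴴ * V₂ = 1) (hV₁₂ : V₁ᴴ * V₂ = 0) (hV₂₁ : V₂ᴴ * V₁ = 0)
    (q : ℕ) :
    (A * Aᴴ) ^ q * A = U₁ * ((L * Lᴴ) ^ q * L) * V₁ᴴ + U₂ * ((S * Sᴴ) ^ q * S) * V₂ᴴ := by
  have cancel {a b c d : ℕ} {X : Matrix (Fin a) (Fin b) ℂ} {Y : Matrix (Fin b) (Fin c) ℂ}
      {Z : Matrix (Fin a) (Fin c) ℂ} (h : X * Y = Z) (W : Matrix (Fin c) (Fin d) ℂ) :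
      X * (Y * W) = Z * W := by rw [← Matrix.mul_assoc, h]
  have hAA : A * Aᴴ = U₁ * (L * Lᴴ) * U₁ᴴ + U₂ * (S * Sᴴ) * U₂ᴴ := by
    rw [hA]
    simp only [conjTranspose_add, conjTranspose_mul, conjTranspose_conjTranspose,
      Matrix.add_mul, Matrix.mul_add, Matrix.mul_assoc, cancel hV₁, cancel hV₂, cancel hV₁₂,
      cancel hV₂₁, Matrix.one_mul, Matrix.zero_mul, Matrix.mul_zero, add_zero, zero_add]
  induction q with
  | zero => simpa using hA
  | succ q ih =>
    rw [pow_succ', Matrix.mul_assoc, ih, hAA, pow_succ', pow_succ']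
    simp only [Matrix.add_mul, Matrix.mul_add, Matrix.mul_assoc, cancel hU₁, cancel hU₂,
      cancel hU₁₂, cancel hU₂₁, Matrix.one_mul, Matrix.zero_mul, Matrix.mul_zero, add_zero,
      zero_add]

lemma schatten_residual_le {k m₂ n₂ ρ : ℕ} (q : ℕ) (hk : 1 ≤ k)
    {A : Matrix (Fin (k + m₂)) (Fin (k + n₂)) ℂ}
    {U : Matrix (Fin (k + m₂)) (Fin (k + m₂)) ℂ}
    {V : Matrix (Fin (k + n₂)) (Fin (k + n₂)) ℂ} {σ : ℕ → ℝ}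
    (hU : Uᴴ * U = 1) (hV : Vᴴ * V = 1)
    (hσ0 : ∀ i, 0 ≤ σ i) (hσm : ∀ i j, i ≤ j → σ j ≤ σ i)
    (hA : A = U * diagRect σ 0 (k + m₂) (k + n₂) * Vᴴ) (hrank : 0 < σ (k - 1))
    {Ω : Matrix (Fin (k + n₂)) (Fin (k + ρ)) ℂ} (hΩ : ((colsL V)ᴴ * Ω).rank = k)
    {Q : Matrix (Fin (k + m₂)) (Fin (k + ρ)) ℂ} {R : Matrix (Fin (k + ρ)) (Fin (k + ρ)) ℂ}
    (hQ : Qᴴ * Q = 1) (hQR : (A * Aᴴ) ^ q * A * Ω = Q * R) (p : ℝ≥0∞) [Fact (1 ≤ p)] :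
    schatten p ((1 - Q * Qᴴ) * A) ≤
      schatten p (diagRect σ k m₂ n₂) + (σ k / σ (k - 1)) ^ (2 * q) *
        schatten p (diagRect σ k m₂ n₂ *
          ((colsR V)ᴴ * Ω * rpinv ((colsL V)ᴴ * Ω))) := by
  have hσpos (i : Fin k) : 0 < σ i := hrank.trans_le (hσm _ _ (by omega))
  rw [mul_diagRect_mul_conjTranspose] at hA
  have hpow := mul_conjTranspose_pow_mul hA (colsL_conjTranspose_mul_colsL hU)
    (colsR_conjTranspose_mul_colsR hU) (colsL_conjTranspose_mul_colsR hU)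
    (colsR_conjTranspose_mul_colsL hU) (colsL_conjTranspose_mul_colsL hV)
    (colsR_conjTranspose_mul_colsR hV) (colsL_conjTranspose_mul_colsR hV)
    (colsR_conjTranspose_mul_colsL hV) q
  have hpinv := mul_rpinv_of_rank_eq hΩ
  have hU₂ : ‖colsR U‖ ≤ 1 := norm_le_one_of_isometry (colsR_conjTranspose_mul_colsR hU)
  have hV₁ : ‖(colsL V)ᴴ‖ ≤ 1 := by
    rw [l2_opNorm_conjTranspose]
    exact norm_le_one_of_isometry (colsL_conjTranspose_mul_colsL hV)
  have hV₂ : ‖(colsR V)ᴴ‖ ≤ 1 := by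
    rw [l2_opNorm_conjTranspose]
    exact norm_le_one_of_isometry (colsR_conjTranspose_mul_colsR hV)
  have hT := norm_diagRect_mul_conjTranspose_pow_le hσ0 hσm k m₂ n₂ q
  have hP := norm_one_sub_mul_conjTranspose_le hQ
  have hPQ : (1 - Q * Qᴴ) * Q = 0 := by
    rw [Matrix.sub_mul, Matrix.mul_assoc, hQ, Matrix.one_mul, Matrix.mul_one, sub_self]
  set P := 1 - Q * Qᴴ
  set S := diagRect σ k m₂ n₂
  set L : Matrix (Fin k) (Fin k) ℂ := diagonal (fun i : Fin k => (σ i : ℂ)) with hL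
  set G := rpinv ((colsL V)ᴴ * Ω)
  set N : Matrix (Fin k) (Fin k) ℂ :=
    diagonal (fun i : Fin k => ((σ i ^ (2 * q))⁻¹ : ℝ) : Fin k → ℂ) with hN
  have hLN : (L * Lᴴ) ^ q * L * N = L := by
    rw [hL, hN, diagonal_conjTranspose, diagonal_mul_diagonal, diagonal_pow,
      diagonal_mul_diagonal, diagonal_mul_diagonal]
    congr 1
    funext i
    have : (σ i : ℂ) ≠ 0 := by exact_mod_cast (hσpos i).ne'
    simp only [Pi.pow_apply, Pi.star_apply, RCLike.star_def, Complex.conj_ofReal]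
    push_cast
    rw [← sq, ← pow_mul]
    field_simp
  have hNnorm : ‖N‖ ≤ (σ (k - 1) ^ (2 * q))⁻¹ := by
    rw [hN, l2_opNorm_diagonal, pi_norm_le_iff_of_nonneg (by positivity)]
    intro i
    have := hσpos i
    rw [Complex.norm_real, Real.norm_of_nonneg (by positivity)]
    gcongr
    exact hσm _ _ (by omega)
  have hYzero : P * (colsL U * ((L * Lᴴ) ^ q * L) * ((colsL V)ᴴ * Ω) +
      colsR U * ((S * Sᴴ) ^ q * S) * ((colsR V)ᴴ * Ω)) = 0 := by
    rw [← Matrix.mul_assoc, ← Matrix.mul_assoc _ (colsR V)ᴴ, ← Matrix.add_mul, ← hpow, hQR,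
      ← Matrix.mul_assoc, hPQ, Matrix.zero_mul]
  have hlead : P * (colsL U * L) =
      -(P * colsR U * (S * Sᴴ) ^ q * (S * ((colsR V)ᴴ * Ω * G)) * N) := by
    have h := congrArg (fun X => X * G * N) hYzero
    simp only [Matrix.mul_add, Matrix.add_mul, Matrix.zero_mul] at h
    rw [eq_neg_iff_add_eq_zero, ← h]
    congr 1
    · rw [← Matrix.mul_assoc P, ← Matrix.mul_assoc P, Matrix.mul_assoc _ _ G, hpinv,
        Matrix.mul_one, ← Matrix.mul_assoc P, Matrix.mul_assoc _ _ N, hLN]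
    · simp only [Matrix.mul_assoc]
  have hPA : P * A = P * colsR U * S * (colsR V)ᴴ +
      -(P * colsR U * (S * Sᴴ) ^ q) * (S * ((colsR V)ᴴ * Ω * G)) * (N * (colsL V)ᴴ) := by
    rw [hA, Matrix.mul_add, add_comm (P * _), ← Matrix.mul_assoc P (colsL U * L),
      ← Matrix.mul_assoc P (colsR U * S), ← Matrix.mul_assoc P (colsR U), hlead]
    simp only [Matrix.mul_assoc, Matrix.neg_mul]
  have hPU : ‖P * colsR U‖ ≤ 1 :=
    (l2_opNorm_mul _ _).trans (mul_le_one₀ hP (norm_nonneg _) hU₂)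
  rw [hPA]
  refine (schatten_add_le p _ _).trans (add_le_add ?_ ?_)
  · exact (schatten_mul_mul_le p _ S _).trans
      (mul_le_of_le_one_left (schatten_nonneg p S) (mul_le_one₀ hPU (norm_nonneg _) hV₂))
  · refine (schatten_mul_mul_le p _ _ _).trans ?_
    have h₁ : ‖-(P * colsR U * (S * Sᴴ) ^ q)‖ ≤ σ k ^ (2 * q) := by
      rw [norm_neg]
      exact (l2_opNorm_mul _ _).trans
        ((mul_le_of_le_one_left (norm_nonneg _) hPU).trans hT)
    have h₂ : ‖N * (colsL V)ᴴ‖ ≤ (σ (k - 1) ^ (2 * q))⁻¹ :=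
      (l2_opNorm_mul _ _).trans
        ((mul_le_of_le_one_right (norm_nonneg _) hV₁).trans hNnorm)
    have h₃ := schatten_nonneg p (S * ((colsR V)ᴴ * Ω * G))
    rw [div_pow, div_eq_mul_inv]
    have h₄ := pow_nonneg (hσ0 k) (2 * q)
    gcongr

end SchattenNorm

/-- Theorem 4.1, bound (4.1): low-rank approximation error in the Schatten-p norm. -/
theorem lowrank_error_schatten
    {k m₂ n₂ ρ : ℕ} (q : ℕ) (hk : 1 ≤ k)
    (A : Matrix (Fin (k + m₂)) (Fin (k + n₂)) ℂ)
    (U : Matrix (Fin (k + m₂)) (Fin (k + m₂)) ℂ)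
    (V : Matrix (Fin (k + n₂)) (Fin (k + n₂)) ℂ)
    (σ : ℕ → ℝ)
    (hU : Uᴴ * U = 1) (hU' : U * Uᴴ = 1)
    (hV : Vᴴ * V = 1) (hV' : V * Vᴴ = 1)
    (hσ0 : ∀ i, 0 ≤ σ i) (hσm : ∀ i j, i ≤ j → σ j ≤ σ i)
    (hA : A = U * diagRect σ 0 (k + m₂) (k + n₂) * Vᴴ)
    (hrank : 0 < σ (k - 1)) (hgap : σ k < σ (k - 1))
    (Ω : Matrix (Fin (k + n₂)) (Fin (k + ρ)) ℂ)
    (hΩ : ((colsL V)ᴴ * Ω).rank = k)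
    (Q : Matrix (Fin (k + m₂)) (Fin (k + ρ)) ℂ)
    (R : Matrix (Fin (k + ρ)) (Fin (k + ρ)) ℂ)
    (hQ : Qᴴ * Q = 1) (hR : R.BlockTriangular id)
    (hQR : (A * Aᴴ) ^ q * A * Ω = Q * R)
    :
    ∀ p : ℝ≥0∞, 1 ≤ p →
      schatten p ((1 - Q * Qᴴ) * A) ≤
        schatten p (diagRect σ k m₂ n₂) + (σ k / σ (k - 1)) ^ (2 * q) * schatten p (diagRect σ k m₂ n₂ * ((colsR V)ᴴ * Ω * rpinv ((colsL V)ᴴ * Ω))) := by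
  intro p hp
  have : Fact (1 ≤ p) := ⟨hp⟩
  exact schatten_residual_le q hk hU hV hσ0 hσm hA hrank hΩ hQ hQR p
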